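/- Let R be a left coherent ring of finite left global dimension. Then the canonical triangulated functor D(mod R) → D(Mod R) induced by the inclusion of finitely presented modules into all modules is fully faithful, and its essential image is the full subcategory of complexes all of whose cohomology modules are finitely presented. -/

import Mathlib

open CategoryTheory CategoryTheory.Limits

namespace Stmt7Aux

open HomologicalComplex DerivedCategory Pretriangulated

section General

variable {C : Type*} [Category* C] [Abelian C]

/-- The cochain complex with zero differentials. -/
def zc (P : ℤ → C) : CochainComplex C ℤ where
  X := P
  d _ _ := 0

lemma isKProjective_of_d_eq_zero (K : CochainComplex C ℤ) (hd : ∀ i j, K.d i j = 0)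
    (hP : ∀ n, Projective (K.X n)) : K.IsKProjective := by
  constructor
  intro L f hL
  have key : ∀ i j : ℤ, (ComplexShape.up ℤ).Rel j i →
      ∃ h : K.X i ⟶ L.X j, h ≫ L.d j i = f.f i := by
    intro i j hij
    have h1 : (L.sc' j i (i + 1)).Exact :=
      (L.exactAt_iff' j i (i + 1) ((ComplexShape.up ℤ).prev_eq' hij) (by simp)).1 (hL i)
    have := hP i
    have hf : f.f i ≫ L.d i (i + 1) = 0 := by
      rw [f.comm i (i + 1), hd, zero_comp]
    exact ⟨h1.liftFromProjective (f.f i) hf, h1.liftFromProjective_comp (f.f i) hf⟩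
  choose h hh using key
  have : f = Homotopy.nullHomotopicMap' h := by
    ext i
    rw [Homotopy.nullHomotopicMap'_f (k₂ := i - 1) (k₁ := i) (k₀ := i + 1) (by simp) (by simp)]
    rw [hh, hd, zero_comp, zero_add]
  exact ⟨(Homotopy.ofEq this).trans (Homotopy.nullHomotopy' h)⟩

lemma exists_hom_of_d_eq_zero (K : CochainComplex C ℤ) (hd : ∀ i j, K.d i j = 0)
    (hP : ∀ n, Projective (K.X n)) (Y : CochainComplex C ℤ)
    (e : ∀ n, K.X n ⟶ Y.homology n) :
    ∃ (φ : K ⟶ Y) (i : ∀ n, K.X n ≅ K.homology n),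
      ∀ n, (i n).hom ≫ homologyMap φ n = e n := by
  have key : ∀ n, ∃ c : K.X n ⟶ Y.cycles n, c ≫ Y.homologyπ n = e n := fun n =>
    ⟨Projective.factorThru (e n) (Y.homologyπ n), Projective.factorThru_comp _ _⟩
  choose c hc using key
  let φ : K ⟶ Y :=
    { f := fun n => c n ≫ Y.iCycles n
      comm' := by intro i j _; simp [hd] }
  have h1 : ∀ n, IsIso (K.iCycles n) := fun n =>
    K.isIso_iCycles n (n + 1) (by simp) (hd _ _)
  have h2 : ∀ n, IsIso (K.homologyπ n) := fun n =>
    K.isIso_homologyπ (n - 1) n (by simp) (hd _ _)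
  refine ⟨φ, fun n => (asIso (K.iCycles n)).symm ≪≫ asIso (K.homologyπ n), fun n => ?_⟩
  have h3 : cyclesMap φ n = K.iCycles n ≫ c n := by
    rw [← cancel_mono (Y.iCycles n), cyclesMap_i, Category.assoc]
  simp [h3, hc]

lemma zc_isKProjective (P : ℤ → C) (hP : ∀ n, Projective (P n)) :
    CochainComplex.IsKProjective (zc P) :=
  isKProjective_of_d_eq_zero _ (fun _ _ => rfl) hP

lemma exists_zc_hom (P : ℤ → C) (hP : ∀ n, Projective (P n)) (Y : CochainComplex C ℤ)
    (e : ∀ n, P n ⟶ Y.homology n) :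
    ∃ (φ : zc P ⟶ Y) (i : ∀ n, P n ≅ (zc P).homology n),
      ∀ n, (i n).hom ≫ homologyMap φ n = e n :=
  exists_hom_of_d_eq_zero (zc P) (fun _ _ => rfl) hP Y e

variable [HasDerivedCategory C]

lemma Q_map_surjective (K L : CochainComplex C ℤ) [K.IsKProjective] (g : Q.obj K ⟶ Q.obj L) :
    ∃ f : K ⟶ L, Q.map f = g := by
  obtain ⟨f', hf'⟩ := (CochainComplex.IsKProjective.Qh_map_bijective K
    ((HomotopyCategory.quotient _ _).obj L)).2
    ((quotientCompQhIso C).hom.app K ≫ g ≫ (quotientCompQhIso C).inv.app L)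
  obtain ⟨f, rfl⟩ := (HomotopyCategory.quotient _ _).map_surjective f'
  refine ⟨f, ?_⟩
  rw [← cancel_epi ((quotientCompQhIso C).hom.app K), ← quotientCompQhIso_hom_naturality, hf']
  simp

lemma homotopy_of_Q_map_eq_zero (K L : CochainComplex C ℤ) [K.IsKProjective] (f : K ⟶ L)
    (hf : Q.map f = 0) : Nonempty (Homotopy f 0) := by
  refine ⟨HomotopyCategory.homotopyOfEq _ _ ?_⟩
  apply (CochainComplex.IsKProjective.Qh_map_bijective K
    ((HomotopyCategory.quotient _ _).obj L)).1
  rw [← cancel_mono ((quotientCompQhIso C).hom.app L), quotientCompQhIso_hom_naturality, hf]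
  simp

lemma mappingCone_isKProjective {K L : CochainComplex C ℤ} (hK : K.IsKProjective)
    (hL : L.IsKProjective) (f : K ⟶ L) :
    (CochainComplex.mappingCone f).IsKProjective := by
  rw [CochainComplex.isKProjective_iff_leftOrthogonal] at hK hL ⊢
  exact (HomotopyCategory.subcategoryAcyclic C).leftOrthogonal.ext_of_isTriangulatedClosed₃
    _ (HomotopyCategory.mappingCone_triangleh_distinguished f) hK hL

theorem exists_resolution (W : C → Prop)
    (hiso : ∀ {A B : C}, (A ≅ B) → W A → W B)
    (hbiprod : ∀ A B : C, W A → W B → W (A ⊞ B))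
    (hker : ∀ S : ShortComplex C, S.ShortExact → W S.X₂ → W S.X₃ → W S.X₁)
    (hepi : ∀ H : C, W H → ∃ (P : C) (p : P ⟶ H), W P ∧ Projective P ∧ Epi p) (k : ℕ) :
    ∀ Y : CochainComplex C ℤ, (∀ n, W (Y.homology n)) →
      (∀ n, HasProjectiveDimensionLT (Y.homology n) (k + 1)) →
      ∃ Z : CochainComplex C ℤ, Z.IsKProjective ∧ (∀ n, W (Z.X n)) ∧
        Nonempty (Q.obj Z ≅ Q.obj Y) := by
  induction k with
  | zero =>
    intro Y hW hpd
    have hP : ∀ n, Projective (Y.homology n) := fun n =>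
      (projective_iff_hasProjectiveDimensionLT_one).2 (hpd n)
    obtain ⟨φ, i, hi⟩ := exists_zc_hom _ hP Y (fun n => 𝟙 _)
    have : QuasiIso φ := by
      constructor
      intro n
      rw [quasiIsoAt_iff_isIso_homologyMap]
      have : homologyMap φ n = (i n).inv := by
        rw [← cancel_epi (i n).hom, hi]; simp
      rw [this]
      infer_instance
    exact ⟨_, zc_isKProjective _ hP, hW, ⟨asIso (Q.map φ)⟩⟩
  | succ k ih =>
    intro Y hW hpd
    choose P p hWP hP hp using fun n => hepi _ (hW n)
    obtain ⟨φ, i, hi⟩ := exists_zc_hom P hP Y p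
    have hT := mappingCocone_triangle_distinguished φ
    have hφ : ∀ n, Epi ((DerivedCategory.homologyFunctor C n).map (Q.map φ)) := by
      intro n
      have h1 : Epi (homologyMap φ n) := by
        have : Epi ((i n).hom ≫ homologyMap φ n) := by rw [hi]; exact hp n
        exact epi_of_epi (i n).hom _
      exact ((MorphismProperty.epimorphisms C).arrow_mk_iso_iff
        (((Functor.mapArrowFunctor _ _).mapIso (homologyFunctorFactors C n)).app
          (Arrow.mk φ))).2 h1
    have hS : ∀ n, (ShortComplex.mk _ _ (by
        simp only [← Functor.map_comp, comp_distTriang_mor_zero₁₂ _ hT, Functor.map_zero] :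
        (DerivedCategory.homologyFunctor C n).map (Q.mapTriangle.obj (CochainComplex.mappingCocone.triangle φ)).mor₁ ≫
        (DerivedCategory.homologyFunctor C n).map
          (Q.mapTriangle.obj (CochainComplex.mappingCocone.triangle φ)).mor₂ = 0)).ShortExact := by
      intro n
      refine { exact := HomologySequence.exact₂ _ hT n, mono_f := ?_, epi_g := hφ n }
      refine (HomologySequence.mono_homologyMap_mor₁_iff _ hT (n - 1) n).2 ?_
      exact (HomologySequence.epi_homologyMap_mor₂_iff _ hT (n - 1) n).1 (hφ (n - 1))
    let e₁ := fun n => (homologyFunctorFactors C n).app (CochainComplex.mappingCocone φ)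
    let e₂ := fun n => i n ≪≫ ((homologyFunctorFactors C n).app (zc P)).symm
    let e₃ := fun n => ((homologyFunctorFactors C n).app Y).symm
    obtain ⟨W', hW'1, hW'2, ⟨e⟩⟩ := ih (CochainComplex.mappingCocone φ)
      (fun n => hiso (e₁ n) (hker _ (hS n) (hiso (e₂ n) (hWP n)) (hiso (e₃ n) (hW n))))
      (fun n => by
        refine @hasProjectiveDimensionLT_of_iso _ _ _ _ _ (e₁ n) _ ?_
        refine ((hS n).hasProjectiveDimensionLT_X₃_iff k (Projective.of_iso (e₂ n) (hP n))).1 ?_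
        exact @hasProjectiveDimensionLT_of_iso _ _ _ _ _ (e₃ n) _ (hpd n))
    have hK := zc_isKProjective P hP
    obtain ⟨ψ, hψ⟩ := Q_map_surjective W' (zc P)
      (e.hom ≫ Q.map (CochainComplex.mappingCocone.fst φ))
    refine ⟨CochainComplex.mappingCone ψ, mappingCone_isKProjective hW'1 hK ψ, fun n => ?_, ⟨?_⟩⟩
    · exact hiso (homotopyCofiber.XIsoBiprod ψ n (n + 1) rfl).symm
        (hbiprod _ _ (hW'2 _) (hWP n))
    · exact Triangle.π₃.mapIso (isoTriangleOfIso₁₂ _ _ (mappingCone_triangle_distinguished ψ) hT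
        e (Iso.refl _) (by
          refine (Category.comp_id _).trans ?_
          exact hψ))

end General

section Functor

variable {A B : Type*} [Category* A] [Category* B] [Abelian A] [Abelian B]
  (ι : A ⥤ B) [ι.Full] [ι.Faithful] [ι.Additive]

lemma essImage_biprod (M N : B) (hM : ι.essImage M) (hN : ι.essImage N) :
    ι.essImage (M ⊞ N) := by
  obtain ⟨X, ⟨eX⟩⟩ := hM
  obtain ⟨Y, ⟨eY⟩⟩ := hN
  have := preservesBinaryBiproducts_of_preservesBiproducts ι
  exact ⟨X ⊞ Y, ⟨ι.mapBiprod X Y ≪≫ biprod.mapIso eX eY⟩⟩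

lemma essImage_kernel [PreservesFiniteLimits ι] (S : ShortComplex B) (hS : S.ShortExact)
    (h2 : ι.essImage S.X₂) (h3 : ι.essImage S.X₃) : ι.essImage S.X₁ := by
  obtain ⟨X, ⟨eX⟩⟩ := h2
  obtain ⟨Y, ⟨eY⟩⟩ := h3
  obtain ⟨g, hg⟩ := ι.map_surjective (eX.hom ≫ S.g ≫ eY.inv)
  refine ⟨kernel g, ⟨PreservesKernel.iso ι g ≪≫ kernel.mapIso (ι.map g) S.g eX eY (by simp [hg]) ≪≫
    (limit.isLimit _).conePointUniqueUpToIso hS.fIsKernel⟩⟩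

lemma essImage_complex (Z : CochainComplex B ℤ) (hZ : ∀ n, ι.essImage (Z.X n)) :
    ∃ X : CochainComplex A ℤ,
      Nonempty ((ι.mapHomologicalComplex (ComplexShape.up ℤ)).obj X ≅ Z) := by
  choose X e using hZ
  have e' := fun n => (e n).some
  refine ⟨{ X := X
            d := fun i j => ι.preimage ((e' i).hom ≫ Z.d i j ≫ (e' j).inv)
            shape := fun i j hij => ι.map_injective (by simp [Z.shape i j hij])
            d_comp_d' := fun i j k _ _ => ι.map_injective (by simp) }, ⟨?_⟩⟩
  exact HomologicalComplex.Hom.isoOfComponents e' (by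
    intro i j _
    simp only [Functor.mapHomologicalComplex_obj_d, Functor.map_preimage]
    exact (by simp : (e' i).hom ≫ Z.d i j = ((e' i).hom ≫ Z.d i j ≫ (e' j).inv) ≫ (e' j).hom))

lemma homotopy_of_map (K L : CochainComplex A ℤ) (f : K ⟶ L)
    (h : Homotopy ((ι.mapHomologicalComplex (ComplexShape.up ℤ)).map f) 0) :
    Nonempty (Homotopy f 0) := by
  refine ⟨{ hom := fun i j => ι.preimage (h.hom i j)
            zero := fun i j hij => by
              rw [h.zero i j hij]
              exact ι.map_injective ((ι.map_preimage _).trans (ι.map_zero _ _).symm)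
            comm := fun i => ι.map_injective ?_ }⟩
  have := h.comm i
  rw [dNext_eq _ (show (ComplexShape.up ℤ).Rel i (i + 1) by simp),
    prevD_eq _ (show (ComplexShape.up ℤ).Rel (i - 1) i by simp)] at this ⊢
  have p1 := ι.map_preimage (X := K.X (i + 1)) (Y := L.X i) (h.hom (i + 1) i)
  have p2 := ι.map_preimage (X := K.X i) (Y := L.X (i - 1)) (h.hom i (i - 1))
  simp only [Functor.map_add, Functor.map_comp, HomologicalComplex.zero_f, Functor.map_zero]
  rw [p1, p2]
  exact this

variable [PreservesFiniteLimits ι] [PreservesFiniteColimits ι]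

lemma isKProjective_of_map (K : CochainComplex A ℤ)
    (hK : CochainComplex.IsKProjective ((ι.mapHomologicalComplex (ComplexShape.up ℤ)).obj K)) :
    K.IsKProjective := by
  constructor
  intro L f hL
  have hL' : ((ι.mapHomologicalComplex (ComplexShape.up ℤ)).obj L).Acyclic := fun n =>
    (hL n).map ι
  exact homotopy_of_map ι _ _ f
    (CochainComplex.IsKProjective.homotopyZero
      ((ι.mapHomologicalComplex (ComplexShape.up ℤ)).map f) hL')

/-- `ι` commutes with homology. -/
noncomputable def mapHomology (X : CochainComplex A ℤ) (n : ℤ) :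
    ((ι.mapHomologicalComplex (ComplexShape.up ℤ)).obj X).homology n ≅ ι.obj (X.homology n) :=
  (X.sc n).mapHomologyIso ι

theorem general [HasDerivedCategory A] [HasDerivedCategory B]
    (hres : ∀ Y : CochainComplex B ℤ, (∀ n, ι.essImage (Y.homology n)) →
      ∃ Z : CochainComplex B ℤ, Z.IsKProjective ∧ (∀ n, ι.essImage (Z.X n)) ∧
        Nonempty (Q.obj Z ≅ Q.obj Y))
    (F : DerivedCategory A ⥤ DerivedCategory B)
    (hF : (ι.mapHomologicalComplex (ComplexShape.up ℤ) ⋙ Q) ≅ (Q ⋙ F)) :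
    F.Full ∧ F.Faithful ∧
      ∀ Y : DerivedCategory B,
        ((∀ n : ℤ, ι.essImage ((DerivedCategory.homologyFunctor B n).obj Y)) ↔
          F.essImage Y) := by
  let ιC := ι.mapHomologicalComplex (ComplexShape.up ℤ)
  have hFmap : ∀ {K L : CochainComplex A ℤ} (f : K ⟶ L),
      F.map (Q.map f) = hF.inv.app K ≫ Q.map (ιC.map f) ≫ hF.hom.app L := by
    intro K L f
    have := hF.hom.naturality f
    dsimp at this
    rw [this]
    simp
  have hres' : ∀ Y : CochainComplex B ℤ, (∀ n, ι.essImage (Y.homology n)) →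
      ∃ Z : CochainComplex A ℤ, CochainComplex.IsKProjective (ιC.obj Z) ∧
        Nonempty (Q.obj (ιC.obj Z) ≅ Q.obj Y) := by
    intro Y hY
    obtain ⟨Z, h1, h2, ⟨e⟩⟩ := hres Y hY
    obtain ⟨X, ⟨e'⟩⟩ := essImage_complex ι Z h2
    exact ⟨X, CochainComplex.isKProjective_of_iso e'.symm, ⟨Q.mapIso e' ≪≫ e⟩⟩
  have hresA : ∀ X : DerivedCategory A, ∃ Z : CochainComplex A ℤ, CochainComplex.IsKProjective (ιC.obj Z) ∧
        Nonempty (Q.obj Z ≅ X) := by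
    intro X
    obtain ⟨K, ⟨eK⟩⟩ : ∃ K : CochainComplex A ℤ, Nonempty (Q.obj K ≅ X) :=
      ⟨_, ⟨Q.objObjPreimageIso X⟩⟩
    obtain ⟨Z, hZ, ⟨e⟩⟩ := hres' (ιC.obj K) (fun n => ⟨_, ⟨(mapHomology ι K n).symm⟩⟩)
    obtain ⟨f, hf⟩ := Q_map_surjective _ _ e.hom
    obtain ⟨f, rfl⟩ := ιC.map_surjective f
    have h1 : QuasiIso (ιC.map f) := by
      rw [← isIso_Q_map_iff_quasiIso, hf]; infer_instance
    have h2 : QuasiIso f := (quasiIso_map_iff_of_preservesHomology f ι).1 h1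
    exact ⟨Z, hZ, ⟨asIso (Q.map f) ≪≫ eK⟩⟩
  refine ⟨⟨?_⟩, ⟨?_⟩, fun Y => ⟨fun hY => ?_, ?_⟩⟩
  · intro X X' g
    obtain ⟨Z, hZ, ⟨e⟩⟩ := hresA X
    obtain ⟨Z', -, ⟨e'⟩⟩ := hresA X'
    obtain ⟨f, hf⟩ := Q_map_surjective (ιC.obj Z) (ιC.obj Z')
      (hF.hom.app Z ≫ F.map e.hom ≫ g ≫ F.map e'.inv ≫ hF.inv.app Z')
    obtain ⟨f, rfl⟩ := ιC.map_surjective f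
    refine ⟨e.inv ≫ Q.map f ≫ e'.hom, ?_⟩
    rw [F.map_comp, F.map_comp, hFmap, hf]
    simp [← Functor.map_comp, ← Functor.map_comp_assoc]
  · intro X X' a b hab
    obtain ⟨Z, hZ, ⟨e⟩⟩ := hresA X
    obtain ⟨Z', -, ⟨e'⟩⟩ := hresA X'
    have hZA := isKProjective_of_map ι Z hZ
    obtain ⟨a', ha'⟩ := Q_map_surjective Z Z' (e.hom ≫ a ≫ e'.inv)
    obtain ⟨b', hb'⟩ := Q_map_surjective Z Z' (e.hom ≫ b ≫ e'.inv)
    have h1 : F.map (Q.map a') = F.map (Q.map b') := by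
      rw [ha', hb']; simp [hab]
    have h2 : Q.map (ιC.map (a' - b')) = 0 := by
      rw [hFmap, hFmap, cancel_epi, cancel_mono] at h1
      rw [Functor.map_sub, Functor.map_sub, h1, sub_self]
    obtain ⟨h3⟩ := homotopy_of_Q_map_eq_zero _ _ _ h2
    obtain ⟨h4⟩ := homotopy_of_map ι _ _ _ h3
    have h5 := DerivedCategory.Q_map_eq_of_homotopy _ h4
    rw [Functor.map_sub, Functor.map_zero, sub_eq_zero, ha', hb', cancel_epi, cancel_mono] at h5
    exact h5
  · obtain ⟨K, ⟨eK⟩⟩ : ∃ K : CochainComplex B ℤ, Nonempty (Q.obj K ≅ Y) :=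
      ⟨_, ⟨Q.objObjPreimageIso Y⟩⟩
    obtain ⟨Z, hZ, ⟨e⟩⟩ := hres' K (fun n => Functor.essImage.ofIso
      ((DerivedCategory.homologyFunctor B n).mapIso eK.symm ≪≫
        (homologyFunctorFactors B n).app K) (hY n))
    exact ⟨Q.obj Z, ⟨hF.symm.app Z ≪≫ e ≪≫ eK⟩⟩
  · rintro ⟨X, ⟨e⟩⟩ n
    let K := Q.objPreimage X
    let eK : Q.obj K ≅ X := Q.objObjPreimageIso X
    exact ⟨_, ⟨(mapHomology ι K n).symm ≪≫ ((homologyFunctorFactors B n).app (ιC.obj K)).symm ≪≫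
      (DerivedCategory.homologyFunctor B n).mapIso (hF.app K ≪≫ F.mapIso eK ≪≫ e)⟩⟩

end Functor

end Stmt7Aux


/-- Let `R` be a left coherent ring of finite left global dimension.
The canonical functor `D(mod R) ⥤ D(Mod R)` (induced by the inclusion of the abelian
category of finitely presented left modules into all left modules) is fully faithful,
with essential image the complexes whose cohomology modules are all finitely presented.
Here `mod R` is formalized as any abelian category `𝒰` equipped with a fully faithful
exact functor `ι` to `ModuleCat R` whose essential image consists exactly of the
finitely presented modules, and the canonical functor as any `F` compatible with `ι`
via the localization functors `Q`. -/
theorem stmt_7 {R : Type} [Ring R]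
    (hcoh : ∀ I : Submodule R R, I.FG → Module.FinitePresentation R I)
    [HasExt.{0} (ModuleCat.{0} R)]
    (hgl : ∃ d : ℕ, ∀ M N : ModuleCat.{0} R, Subsingleton (Abelian.Ext M N (d + 1)))
    {𝒰 : Type u₁} [Category.{v₁} 𝒰] [Abelian 𝒰]
    (ι : 𝒰 ⥤ ModuleCat.{0} R) [ι.Full] [ι.Faithful] [ι.Additive]
    [PreservesFiniteLimits ι] [PreservesFiniteColimits ι]
    (hima : ∀ X : 𝒰, Module.FinitePresentation R (ι.obj X))
    (himb : ∀ M : ModuleCat.{0} R, Module.FinitePresentation R M →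
      ∃ X : 𝒰, Nonempty (ι.obj X ≅ M))
    [HasDerivedCategory 𝒰] [HasDerivedCategory (ModuleCat.{0} R)]
    (F : DerivedCategory 𝒰 ⥤ DerivedCategory (ModuleCat.{0} R))
    (hF : (ι.mapHomologicalComplex (ComplexShape.up ℤ) ⋙ DerivedCategory.Q) ≅
      (DerivedCategory.Q ⋙ F)) :
    F.Full ∧ F.Faithful ∧
      ∀ Y : DerivedCategory (ModuleCat.{0} R),
        ((∀ n : ℤ, Module.FinitePresentation R
            ((DerivedCategory.homologyFunctor (ModuleCat.{0} R) n).obj Y)) ↔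
          F.essImage Y) := by
  have hW : ∀ M : ModuleCat.{0} R, Module.FinitePresentation R M ↔ ι.essImage M := by
    intro M
    refine ⟨himb M, ?_⟩
    rintro ⟨X, ⟨e⟩⟩
    have := hima X
    exact Module.FinitePresentation.of_equiv e.toLinearEquiv
  simp only [hW]
  obtain ⟨d, hd⟩ := hgl
  have hpd : ∀ M : ModuleCat.{0} R, HasProjectiveDimensionLT M (d + 1) := by
    intro M
    exact hasProjectiveDimensionLT_of_enoughInjectives M (d + 1) (hd M)
  refine Stmt7Aux.general ι (fun Y hY => ?_) F hF
  refine Stmt7Aux.exists_resolution (fun M => ι.essImage M) (fun e h => h.ofIso e)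
    (Stmt7Aux.essImage_biprod ι) (Stmt7Aux.essImage_kernel ι) (fun H hH => ?_) d Y hY
    (fun n => hpd _)
  have := (hW H).2 hH
  obtain ⟨n, f, hf⟩ := Module.Finite.exists_fin' R H
  refine ⟨ModuleCat.of R (Fin n → R), ModuleCat.ofHom f, (hW _).1 ?_, ?_, ?_⟩
  · change Module.FinitePresentation R (Fin n → R)
    infer_instance
  · exact ModuleCat.projective_of_free (Pi.basisFun R (Fin n))
  · exact (ModuleCat.epi_iff_surjective _).2 hf
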